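/- arXiv:2009.06196 — 7 statements merged into one kernel-verified Lean document; each statement's English description precedes it below -/
import Mathlib

section
/- Let N, n, p, m, m_a, m_f, p_f, q, n_c be natural numbers and fix real matrices A : N×N, B : N×m, S_a : m×m_a, F₁ : N×m_f, F₂ : N×p_f, Nw : N×q, C : p×N, H : N×p, K₁ : N×p, T : N×N, L : N×n, D_ac : n×n_c. Define F := A − H·C·A − K₁·C and K := K₁ + F·H. Let u, a_u, f₁, f₂, ω, a_c, z_p, z_c be arbitrary functions of time with values in the appropriate spaces, with z_p, z_c : ℝ→ℝ^n. Suppose x : ℝ→ℝ^N and z : ℝ→ℝ^N are differentiable with, for every t ∈ ℝ, x'(t) = A·x(t) + B·(u(t) + S_a·a_u(t)) + F₁·f₁(t) + F₂·f₂(t) + Nw·ω(t) and z'(t) = F·z(t) + T·B·(u(t) + S_a·a_u(t)) + K·C·x(t) + L·(z_p(t) − z_c(t) − D_ac·a_c(t)). Then the detector error e := x − z − H·C·x is differentiable and satisfies, for every t ∈ ℝ, e'(t) = F·e(t) + (I − T − H·C)·(B·u(t) + B·S_a·a_u(t)) + (I − H·C)·F₁·f₁(t) + (I − H·C)·F₂·f₂(t)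 + (I − H·C)·Nw·ω(t) − L·(z_p(t) − z_c(t)) + L·D_ac·a_c(t). -/
open Matrix

/-- UIO-based detector error dynamics (equation (11) of the paper, with the sign
of the `L D_ac a_c` term matching the detector definition): with
`F = A - H C A - K₁ C` and `K = K₁ + F H`, the detector error
`e = x - z - H C x` (i.e. `e = x - x̂` with `x̂ = z + H y_p`, `y_p = C x`)
satisfies the stated differential equation. -/
theorem uio_detector_error_dynamics {N n p m m_a m_f p_f q n_c : ℕ}
    (A : Matrix (Fin N) (Fin N) ℝ)
    (B : Matrix (Fin N) (Fin m) ℝ)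
    (S_a : Matrix (Fin m) (Fin m_a) ℝ)
    (F₁ : Matrix (Fin N) (Fin m_f) ℝ)
    (F₂ : Matrix (Fin N) (Fin p_f) ℝ)
    (Nw : Matrix (Fin N) (Fin q) ℝ)
    (C : Matrix (Fin p) (Fin N) ℝ)
    (H K₁ : Matrix (Fin N) (Fin p) ℝ)
    (T : Matrix (Fin N) (Fin N) ℝ)
    (L : Matrix (Fin N) (Fin n) ℝ)
    (D_ac : Matrix (Fin n) (Fin n_c) ℝ)
    (F : Matrix (Fin N) (Fin N) ℝ) (K : Matrix (Fin N) (Fin p) ℝ)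
    (hF : F = A - H * C * A - K₁ * C)
    (hK : K = K₁ + F * H)
    (u : ℝ → Fin m → ℝ) (a_u : ℝ → Fin m_a → ℝ)
    (f₁ : ℝ → Fin m_f → ℝ) (f₂ : ℝ → Fin p_f → ℝ)
    (ω : ℝ → Fin q → ℝ) (a_c : ℝ → Fin n_c → ℝ)
    (z_p z_c : ℝ → Fin n → ℝ)
    (x z : ℝ → Fin N → ℝ)
    (hx : ∀ t : ℝ, HasDerivAt x
      (A.mulVec (x t) + B.mulVec (u t + S_a.mulVec (a_u t))
        + F₁.mulVec (f₁ t) + F₂.mulVec (f₂ t) + Nw.mulVec (ω t)) t)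
    (hz : ∀ t : ℝ, HasDerivAt z
      (F.mulVec (z t) + (T * B).mulVec (u t + S_a.mulVec (a_u t))
        + K.mulVec (C.mulVec (x t))
        + L.mulVec (z_p t - z_c t - D_ac.mulVec (a_c t))) t) :
    ∀ t : ℝ, HasDerivAt (fun s => x s - z s - (H * C).mulVec (x s))
      (F.mulVec (x t - z t - (H * C).mulVec (x t))
        + ((1 : Matrix (Fin N) (Fin N) ℝ) - T - H * C).mulVec
            (B.mulVec (u t) + (B * S_a).mulVec (a_u t))
        + (((1 : Matrix (Fin N) (Fin N) ℝ) - H * C) * F₁).mulVec (f₁ t)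
        + (((1 : Matrix (Fin N) (Fin N) ℝ) - H * C) * F₂).mulVec (f₂ t)
        + (((1 : Matrix (Fin N) (Fin N) ℝ) - H * C) * Nw).mulVec (ω t)
        - L.mulVec (z_p t - z_c t)
        + (L * D_ac).mulVec (a_c t)) t := by
  intro t
  have h1 : HasDerivAt (fun s => (H * C).mulVec (x s)) ((H * C).mulVec
      (A.mulVec (x t) + B.mulVec (u t + S_a.mulVec (a_u t))
        + F₁.mulVec (f₁ t) + F₂.mulVec (f₂ t) + Nw.mulVec (ω t))) t :=
    (LinearMap.toContinuousLinearMap (Matrix.mulVecLin (H * C))).hasFDerivAt.comp_hasDerivAt t (hx t)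
  have hFx : F.mulVec (x t) = A.mulVec (x t) - H.mulVec (C.mulVec (A.mulVec (x t)))
      - K₁.mulVec (C.mulVec (x t)) := by
    rw [hF]
    simp only [Matrix.sub_mulVec, ← Matrix.mulVec_mulVec]
  refine HasDerivAt.congr_deriv (((hx t).sub (hz t)).sub h1) ?_
  rw [hK]
  simp only [Matrix.sub_mulVec, Matrix.add_mulVec, Matrix.mulVec_add, Matrix.mulVec_sub,
    ← Matrix.mulVec_mulVec, Matrix.one_mulVec, hFx]
  abel
end

section
/- Consider the augmented error dynamics (see context). Assume the design conditions: T = I − H·C, (I − H·C)·F₁ = 0, (I − H·C)·F₂ = 0, L·D_ac = 0, L_p·D_ac = 0, and K_p·D_a = 0. Let (u, a_u, a_y, a_c, f₁, f₂, ω) and (ũ, a_u, ã_y, ã_c, f̃₁, f̃₂, ω) be two collections of signals sharing the same actuator attack a_u and the same noise ω, with a_u and ω continuous. If (e, e_p) solves the augmented error dynamics for the first collection, (ẽ, ẽ_p) solves it for the second collection, and e(0) = ẽ(0), e_p(0) = ẽ_p(0), then e(t) = ẽ(t) and e_p(t) = ẽ_p(t) for all t ≥ 0; in particular the residual C·e(t)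 = C·ẽ(t) for all t ≥ 0, i.e., the residual is decoupled from u, a_y, a_c, f₁, f₂. -/
open Matrix

/-- A pair of differentiable functions `(e, e_p)` solves the augmented error
dynamics (equations (12)-(13) of the paper) for the given signals. -/
def SolvesAugmentedErrorDynamics {N n p m m_a m_f p_f q n_c p_a : ℕ}
    (F : Matrix (Fin N) (Fin N) ℝ) (H : Matrix (Fin N) (Fin p) ℝ)
    (C : Matrix (Fin p) (Fin N) ℝ) (T : Matrix (Fin N) (Fin N) ℝ)
    (B : Matrix (Fin N) (Fin m) ℝ) (B_a : Matrix (Fin N) (Fin m_a) ℝ)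
    (F₁ : Matrix (Fin N) (Fin m_f) ℝ) (F₂ : Matrix (Fin N) (Fin p_f) ℝ)
    (Nw : Matrix (Fin N) (Fin q) ℝ) (L : Matrix (Fin N) (Fin n) ℝ)
    (F_p L_p : Matrix (Fin n) (Fin n) ℝ) (T_p : Matrix (Fin n) (Fin N) ℝ)
    (K_p : Matrix (Fin n) (Fin p) ℝ) (D_a : Matrix (Fin p) (Fin p_a) ℝ)
    (D_ac : Matrix (Fin n) (Fin n_c) ℝ)
    (u : ℝ → Fin m → ℝ) (a_u : ℝ → Fin m_a → ℝ) (a_y : ℝ → Fin p_a → ℝ)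
    (a_c : ℝ → Fin n_c → ℝ) (f₁ : ℝ → Fin m_f → ℝ) (f₂ : ℝ → Fin p_f → ℝ)
    (ω : ℝ → Fin q → ℝ)
    (e : ℝ → Fin N → ℝ) (e_p : ℝ → Fin n → ℝ) : Prop :=
  ∀ t : ℝ,
    HasDerivAt e
      (F.mulVec (e t)
        + ((1 : Matrix (Fin N) (Fin N) ℝ) - T - H * C).mulVec
            (B.mulVec (u t) + B_a.mulVec (a_u t))
        + (((1 : Matrix (Fin N) (Fin N) ℝ) - H * C) * F₁).mulVec (f₁ t)
        + (((1 : Matrix (Fin N) (Fin N) ℝ) - H * C) * F₂).mulVec (f₂ t)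
        + (((1 : Matrix (Fin N) (Fin N) ℝ) - H * C) * Nw).mulVec (ω t)
        - L.mulVec (e_p t) - (L * D_ac).mulVec (a_c t)) t
    ∧ HasDerivAt e_p
      ((F_p + L_p).mulVec (e_p t) + (T_p * B_a).mulVec (a_u t)
        - (K_p * D_a).mulVec (a_y t) - (L_p * D_ac).mulVec (a_c t)) t

theorem affine_ode_unique_aux {k : ℕ} (A : Matrix (Fin k) (Fin k) ℝ)
    (b : ℝ → Fin k → ℝ) (f g : ℝ → Fin k → ℝ)
    (hf : ∀ t, HasDerivAt f (A.mulVec (f t) + b t) t)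
    (hg : ∀ t, HasDerivAt g (A.mulVec (g t) + b t) t)
    (h0 : f 0 = g 0) : f = g := by
  let Φ : (Fin k → ℝ) →L[ℝ] (Fin k → ℝ) := LinearMap.toContinuousLinearMap A.mulVecLin
  have hΦ : ∀ x, Φ x = A.mulVec x := fun x => rfl
  refine ODE_solution_unique_univ (v := fun t x => A.mulVec x + b t) (s := fun _ => Set.univ)
    (K := ‖Φ‖₊) (t₀ := 0) ?_ (fun t => ⟨hf t, trivial⟩) (fun t => ⟨hg t, trivial⟩) h0
  intro t
  refine LipschitzWith.lipschitzOnWith ?_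
  refine LipschitzWith.of_dist_le_mul fun x y => ?_
  have := Φ.lipschitz.dist_le_mul x y
  simpa [hΦ, dist_add_right] using this

/-- Proposition 1 (decoupling of the residual res_AA): under the design
conditions, two solutions of the augmented error dynamics sharing the same
(continuous) actuator attack a_u and noise ω, with the same initial error state,
coincide for all t ≥ 0; in particular the residual C·e is decoupled from
u, a_y, a_c, f₁, f₂. -/
theorem actuator_attack_residual_decoupled {N n p m m_a m_f p_f q n_c p_a : ℕ}
    (F : Matrix (Fin N) (Fin N) ℝ) (H : Matrix (Fin N) (Fin p) ℝ)
    (C : Matrix (Fin p) (Fin N) ℝ) (T : Matrix (Fin N) (Fin N) ℝ)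
    (B : Matrix (Fin N) (Fin m) ℝ) (B_a : Matrix (Fin N) (Fin m_a) ℝ)
    (F₁ : Matrix (Fin N) (Fin m_f) ℝ) (F₂ : Matrix (Fin N) (Fin p_f) ℝ)
    (Nw : Matrix (Fin N) (Fin q) ℝ) (L : Matrix (Fin N) (Fin n) ℝ)
    (F_p L_p : Matrix (Fin n) (Fin n) ℝ) (T_p : Matrix (Fin n) (Fin N) ℝ)
    (K_p : Matrix (Fin n) (Fin p) ℝ) (D_a : Matrix (Fin p) (Fin p_a) ℝ)
    (D_ac : Matrix (Fin n) (Fin n_c) ℝ)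
    (hT : T = (1 : Matrix (Fin N) (Fin N) ℝ) - H * C)
    (hF₁ : ((1 : Matrix (Fin N) (Fin N) ℝ) - H * C) * F₁ = 0)
    (hF₂ : ((1 : Matrix (Fin N) (Fin N) ℝ) - H * C) * F₂ = 0)
    (hL : L * D_ac = 0)
    (hLp : L_p * D_ac = 0)
    (hKp : K_p * D_a = 0)
    (u u' : ℝ → Fin m → ℝ) (a_u : ℝ → Fin m_a → ℝ)
    (a_y a_y' : ℝ → Fin p_a → ℝ) (a_c a_c' : ℝ → Fin n_c → ℝ)
    (f₁ f₁' : ℝ → Fin m_f → ℝ) (f₂ f₂' : ℝ → Fin p_f → ℝ)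
    (ω : ℝ → Fin q → ℝ)
    (hau_cont : Continuous a_u) (hω_cont : Continuous ω)
    (e e' : ℝ → Fin N → ℝ) (e_p e_p' : ℝ → Fin n → ℝ)
    (hsol : SolvesAugmentedErrorDynamics F H C T B B_a F₁ F₂ Nw L F_p L_p T_p
      K_p D_a D_ac u a_u a_y a_c f₁ f₂ ω e e_p)
    (hsol' : SolvesAugmentedErrorDynamics F H C T B B_a F₁ F₂ Nw L F_p L_p T_p
      K_p D_a D_ac u' a_u a_y' a_c' f₁' f₂' ω e' e_p')
    (h0 : e 0 = e' 0) (h0p : e_p 0 = e_p' 0) :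
    ∀ t : ℝ, 0 ≤ t → e t = e' t ∧ e_p t = e_p' t := by
  have hT0 : (1 : Matrix (Fin N) (Fin N) ℝ) - T - H * C = 0 := by
    rw [hT]; abel
  simp only [SolvesAugmentedErrorDynamics, hT0, hF₁, hF₂, hL, hLp, hKp, Matrix.zero_mulVec,
    add_zero, sub_zero] at hsol hsol'
  have hp : e_p = e_p' :=
    affine_ode_unique_aux (F_p + L_p) (fun t => (T_p * B_a).mulVec (a_u t)) e_p e_p'
      (fun t => (hsol t).2) (fun t => (hsol' t).2) h0p
  subst hp
  have he : e = e' := by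
    refine affine_ode_unique_aux F
      (fun t => (((1 : Matrix (Fin N) (Fin N) ℝ) - H * C) * Nw).mulVec (ω t)
        - L.mulVec (e_p t)) e e' (fun t => ?_) (fun t => ?_) h0
    · simpa only [add_sub_assoc] using (hsol t).1
    · simpa only [add_sub_assoc] using (hsol' t).1
  subst he
  exact fun t _ => ⟨rfl, rfl⟩
end

section
/- Consider the augmented error dynamics (see context). Assume the design conditions: T = I − H·C, (I − H·C)·F₁ = 0, (I − H·C)·F₂ = 0, L·D_ac = 0, L_p·D_ac = 0, and T_p·B_a = 0. Let (u, a_u, a_y, a_c, f₁, f₂, ω) and (ũ, ã_u, a_y, ã_c, f̃₁, f̃₂, ω) be two collections of signals sharing the same sensor attack a_y and the same noise ω, with a_y and ω continuous. If (e, e_p) solves the augmented error dynamics for the first collection, (ẽ, ẽ_p) solves it for the second collection, and e(0) = ẽ(0), e_p(0) = ẽ_p(0), then e(t) = ẽ(t) and e_p(t) = ẽ_p(t) for all t ≥ 0; in particular the residual C·e(t) = C·ẽ(t) for all t ≥ 0, i.e., the residual is decoupled from u, a_u, a_c, f₁, f₂. -/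
open Matrix

theorem linear_ode_unique_aux {k : ℕ} (A : Matrix (Fin k) (Fin k) ℝ)
    (g : ℝ → Fin k → ℝ) (x y : ℝ → Fin k → ℝ)
    (hx : ∀ t, HasDerivAt x (A.mulVec (x t) + g t) t)
    (hy : ∀ t, HasDerivAt y (A.mulVec (y t) + g t) t)
    (h0 : x 0 = y 0) : x = y := by
  let φ : (Fin k → ℝ) →L[ℝ] (Fin k → ℝ) := LinearMap.toContinuousLinearMap A.mulVecLin
  refine ODE_solution_unique_univ (v := fun t z => A.mulVec z + g t) (s := fun _ => Set.univ)
    (K := ‖φ‖₊) (t₀ := 0) ?_ (fun t => ⟨hx t, trivial⟩) (fun t => ⟨hy t, trivial⟩) h0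
  intro t
  have h : LipschitzWith ‖φ‖₊ (fun z => A.mulVec z) := φ.lipschitz
  refine LipschitzWith.lipschitzOnWith (LipschitzWith.of_dist_le_mul fun a b => ?_)
  simpa only [dist_add_right] using h.dist_le_mul a b

/-- Proposition 2 (decoupling of the residual res_SA): under the design
conditions, two solutions of the augmented error dynamics sharing the same
(continuous) sensor attack a_y and noise ω, with the same initial error state,
coincide for all t ≥ 0; in particular the residual C·e is decoupled from
u, a_u, a_c, f₁, f₂. -/
theorem sensor_attack_residual_decoupled {N n p m m_a m_f p_f q n_c p_a : ℕ}
    (F : Matrix (Fin N) (Fin N) ℝ) (H : Matrix (Fin N) (Fin p) ℝ)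
    (C : Matrix (Fin p) (Fin N) ℝ) (T : Matrix (Fin N) (Fin N) ℝ)
    (B : Matrix (Fin N) (Fin m) ℝ) (B_a : Matrix (Fin N) (Fin m_a) ℝ)
    (F₁ : Matrix (Fin N) (Fin m_f) ℝ) (F₂ : Matrix (Fin N) (Fin p_f) ℝ)
    (Nw : Matrix (Fin N) (Fin q) ℝ) (L : Matrix (Fin N) (Fin n) ℝ)
    (F_p L_p : Matrix (Fin n) (Fin n) ℝ) (T_p : Matrix (Fin n) (Fin N) ℝ)
    (K_p : Matrix (Fin n) (Fin p) ℝ) (D_a : Matrix (Fin p) (Fin p_a) ℝ)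
    (D_ac : Matrix (Fin n) (Fin n_c) ℝ)
    (hT : T = (1 : Matrix (Fin N) (Fin N) ℝ) - H * C)
    (hF₁ : ((1 : Matrix (Fin N) (Fin N) ℝ) - H * C) * F₁ = 0)
    (hF₂ : ((1 : Matrix (Fin N) (Fin N) ℝ) - H * C) * F₂ = 0)
    (hL : L * D_ac = 0)
    (hLp : L_p * D_ac = 0)
    (hTp : T_p * B_a = 0)
    (u u' : ℝ → Fin m → ℝ) (a_u a_u' : ℝ → Fin m_a → ℝ)
    (a_y : ℝ → Fin p_a → ℝ) (a_c a_c' : ℝ → Fin n_c → ℝ)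
    (f₁ f₁' : ℝ → Fin m_f → ℝ) (f₂ f₂' : ℝ → Fin p_f → ℝ)
    (ω : ℝ → Fin q → ℝ)
    (hay_cont : Continuous a_y) (hω_cont : Continuous ω)
    (e e' : ℝ → Fin N → ℝ) (e_p e_p' : ℝ → Fin n → ℝ)
    (hsol : SolvesAugmentedErrorDynamics F H C T B B_a F₁ F₂ Nw L F_p L_p T_p
      K_p D_a D_ac u a_u a_y a_c f₁ f₂ ω e e_p)
    (hsol' : SolvesAugmentedErrorDynamics F H C T B B_a F₁ F₂ Nw L F_p L_p T_p
      K_p D_a D_ac u' a_u' a_y a_c' f₁' f₂' ω e' e_p')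
    (h0 : e 0 = e' 0) (h0p : e_p 0 = e_p' 0) :
    ∀ t : ℝ, 0 ≤ t → e t = e' t ∧ e_p t = e_p' t := by
  have hTz : (1 : Matrix (Fin N) (Fin N) ℝ) - T - H * C = 0 := by rw [hT]; abel
  unfold SolvesAugmentedErrorDynamics at hsol hsol'
  simp only [hTz, hF₁, hF₂, hL, hLp, hTp, Matrix.zero_mulVec, add_zero, sub_zero] at hsol hsol'
  have hp : e_p = e_p' := by
    refine linear_ode_unique_aux (F_p + L_p) (fun t => -(K_p * D_a).mulVec (a_y t)) _ _
      (fun t => ?_) (fun t => ?_) h0p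
    · simpa only [sub_eq_add_neg] using (hsol t).2
    · simpa only [sub_eq_add_neg] using (hsol' t).2
  subst hp
  have he : e = e' := by
    refine linear_ode_unique_aux F (fun t =>
      (((1 : Matrix (Fin N) (Fin N) ℝ) - H * C) * Nw).mulVec (ω t) - L.mulVec (e_p t)) _ _
      (fun t => ?_) (fun t => ?_) h0
    · simpa only [add_sub_assoc] using (hsol t).1
    · simpa only [add_sub_assoc] using (hsol' t).1
  subst he
  exact fun t _ => ⟨rfl, rfl⟩
end

section
/- Consider the augmented error dynamics (see context). Assume the design conditions: L = 0, T = I − H·C, and (I − H·C)·F₂ = 0. Let (u, a_u, a_y, a_c, f₁, f₂, ω) and (ũ, ã_u, ã_y, ã_c, f₁, f̃₂, ω) be two collections of signals sharing the same actuator fault f₁ and the same noise ω, with f₁ and ω continuous. If (e, e_p) solves the augmented error dynamics for the first collection, (ẽ, ẽ_p) solves it for the second collection, and e(0) = ẽ(0), then e(t) = ẽ(t) for all t ≥ 0; in particular the residual C·e(t) = C·ẽ(t) for all t ≥ 0, i.e., the residual is decoupled from u, a_u, a_y, a_c, f₂. -/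
open Matrix

/-- Proposition 3 (decoupling of the residual res_AF): under the design
conditions L = 0, T = I - H C, (I - H C) F₂ = 0, two solutions of the augmented
error dynamics sharing the same (continuous) actuator fault f₁ and noise ω,
with the same initial detector error, have identical detector errors for all
t ≥ 0; in particular the residual C·e is decoupled from u, a_u, a_y, a_c, f₂. -/
theorem actuator_fault_residual_decoupled {N n p m m_a m_f p_f q n_c p_a : ℕ}
    (F : Matrix (Fin N) (Fin N) ℝ) (H : Matrix (Fin N) (Fin p) ℝ)
    (C : Matrix (Fin p) (Fin N) ℝ) (T : Matrix (Fin N) (Fin N) ℝ)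
    (B : Matrix (Fin N) (Fin m) ℝ) (B_a : Matrix (Fin N) (Fin m_a) ℝ)
    (F₁ : Matrix (Fin N) (Fin m_f) ℝ) (F₂ : Matrix (Fin N) (Fin p_f) ℝ)
    (Nw : Matrix (Fin N) (Fin q) ℝ) (L : Matrix (Fin N) (Fin n) ℝ)
    (F_p L_p : Matrix (Fin n) (Fin n) ℝ) (T_p : Matrix (Fin n) (Fin N) ℝ)
    (K_p : Matrix (Fin n) (Fin p) ℝ) (D_a : Matrix (Fin p) (Fin p_a) ℝ)
    (D_ac : Matrix (Fin n) (Fin n_c) ℝ)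
    (hL : L = 0)
    (hT : T = (1 : Matrix (Fin N) (Fin N) ℝ) - H * C)
    (hF₂ : ((1 : Matrix (Fin N) (Fin N) ℝ) - H * C) * F₂ = 0)
    (u u' : ℝ → Fin m → ℝ) (a_u a_u' : ℝ → Fin m_a → ℝ)
    (a_y a_y' : ℝ → Fin p_a → ℝ) (a_c a_c' : ℝ → Fin n_c → ℝ)
    (f₁ : ℝ → Fin m_f → ℝ) (f₂ f₂' : ℝ → Fin p_f → ℝ)
    (ω : ℝ → Fin q → ℝ)
    (hf₁_cont : Continuous f₁) (hω_cont : Continuous ω)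
    (e e' : ℝ → Fin N → ℝ) (e_p e_p' : ℝ → Fin n → ℝ)
    (hsol : SolvesAugmentedErrorDynamics F H C T B B_a F₁ F₂ Nw L F_p L_p T_p
      K_p D_a D_ac u a_u a_y a_c f₁ f₂ ω e e_p)
    (hsol' : SolvesAugmentedErrorDynamics F H C T B B_a F₁ F₂ Nw L F_p L_p T_p
      K_p D_a D_ac u' a_u' a_y' a_c' f₁ f₂' ω e' e_p')
    (h0 : e 0 = e' 0) :
    ∀ t : ℝ, 0 ≤ t → e t = e' t := by
  have hT0 : (1 : Matrix (Fin N) (Fin N) ℝ) - T - H * C = 0 := by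
    rw [hT]; abel
  let A : (Fin N → ℝ) →L[ℝ] (Fin N → ℝ) := LinearMap.toContinuousLinearMap (Matrix.toLin' F)
  have hA : ∀ x, A x = F.mulVec x := fun x => Matrix.toLin'_apply F x
  let d : ℝ → Fin N → ℝ := fun t =>
    (((1 : Matrix (Fin N) (Fin N) ℝ) - H * C) * F₁).mulVec (f₁ t)
      + (((1 : Matrix (Fin N) (Fin N) ℝ) - H * C) * Nw).mulVec (ω t)
  have hlip : ∀ t, LipschitzOnWith ‖A‖₊ (fun x => A x + d t) Set.univ := by
    intro t
    refine LipschitzWith.lipschitzOnWith ?_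
    refine LipschitzWith.of_dist_le_mul fun x y => ?_
    rw [dist_add_right]
    exact A.lipschitz.dist_le_mul x y
  have h1 : ∀ t, HasDerivAt e (A (e t) + d t) t := by
    intro t
    have h := (hsol t).1
    rw [hT0, hF₂, hL] at h
    convert h using 1
    simp [hA, d, add_assoc]
  have h2 : ∀ t, HasDerivAt e' (A (e' t) + d t) t := by
    intro t
    have h := (hsol' t).1
    rw [hT0, hF₂, hL] at h
    convert h using 1
    simp [hA, d, add_assoc]
  have := ODE_solution_unique_univ (v := fun t x => A x + d t) (s := fun _ => Set.univ) hlip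
    (fun t => ⟨h1 t, trivial⟩) (fun t => ⟨h2 t, trivial⟩) h0
  intro t _
  rw [this]
end

section
/- Consider the augmented error dynamics (see context). Assume the design conditions: L = 0, T = I − H·C, and (I − H·C)·F₁ = 0. Let (u, a_u, a_y, a_c, f₁, f₂, ω) and (ũ, ã_u, ã_y, ã_c, f̃₁, f₂, ω) be two collections of signals sharing the same pseudo actuator fault f₂ and the same noise ω, with f₂ and ω continuous. If (e, e_p) solves the augmented error dynamics for the first collection, (ẽ, ẽ_p) solves it for the second collection, and e(0) = ẽ(0), then e(t) = ẽ(t) for all t ≥ 0; in particular the residual C·e(t) = C·ẽ(t) for all t ≥ 0, i.e., the residual is decoupled from u, a_u, a_y, a_c, f₁. -/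
open Matrix

/-- Proposition 4 (decoupling of the residual res_SF): under the design
conditions L = 0, T = I - H C, (I - H C) F₁ = 0, two solutions of the augmented
error dynamics sharing the same (continuous) pseudo actuator fault f₂ and noise
ω, with the same initial detector error, have identical detector errors for all
t ≥ 0; in particular the residual C·e is decoupled from u, a_u, a_y, a_c, f₁. -/
theorem sensor_fault_residual_decoupled {N n p m m_a m_f p_f q n_c p_a : ℕ}
    (F : Matrix (Fin N) (Fin N) ℝ) (H : Matrix (Fin N) (Fin p) ℝ)
    (C : Matrix (Fin p) (Fin N) ℝ) (T : Matrix (Fin N) (Fin N) ℝ)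
    (B : Matrix (Fin N) (Fin m) ℝ) (B_a : Matrix (Fin N) (Fin m_a) ℝ)
    (F₁ : Matrix (Fin N) (Fin m_f) ℝ) (F₂ : Matrix (Fin N) (Fin p_f) ℝ)
    (Nw : Matrix (Fin N) (Fin q) ℝ) (L : Matrix (Fin N) (Fin n) ℝ)
    (F_p L_p : Matrix (Fin n) (Fin n) ℝ) (T_p : Matrix (Fin n) (Fin N) ℝ)
    (K_p : Matrix (Fin n) (Fin p) ℝ) (D_a : Matrix (Fin p) (Fin p_a) ℝ)
    (D_ac : Matrix (Fin n) (Fin n_c) ℝ)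
    (hL : L = 0)
    (hT : T = (1 : Matrix (Fin N) (Fin N) ℝ) - H * C)
    (hF₁ : ((1 : Matrix (Fin N) (Fin N) ℝ) - H * C) * F₁ = 0)
    (u u' : ℝ → Fin m → ℝ) (a_u a_u' : ℝ → Fin m_a → ℝ)
    (a_y a_y' : ℝ → Fin p_a → ℝ) (a_c a_c' : ℝ → Fin n_c → ℝ)
    (f₁ f₁' : ℝ → Fin m_f → ℝ) (f₂ : ℝ → Fin p_f → ℝ)
    (ω : ℝ → Fin q → ℝ)
    (hf₂_cont : Continuous f₂) (hω_cont : Continuous ω)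
    (e e' : ℝ → Fin N → ℝ) (e_p e_p' : ℝ → Fin n → ℝ)
    (hsol : SolvesAugmentedErrorDynamics F H C T B B_a F₁ F₂ Nw L F_p L_p T_p
      K_p D_a D_ac u a_u a_y a_c f₁ f₂ ω e e_p)
    (hsol' : SolvesAugmentedErrorDynamics F H C T B B_a F₁ F₂ Nw L F_p L_p T_p
      K_p D_a D_ac u' a_u' a_y' a_c' f₁' f₂ ω e' e_p')
    (h0 : e 0 = e' 0) :
    ∀ t : ℝ, 0 ≤ t → e t = e' t := by
  intro t _
  have hz : (1 : Matrix (Fin N) (Fin N) ℝ) - T - H * C = 0 := by rw [hT]; abel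
  let A : (Fin N → ℝ) →L[ℝ] (Fin N → ℝ) := LinearMap.toContinuousLinearMap (Matrix.mulVecLin F)
  let g : ℝ → Fin N → ℝ := fun t =>
    (((1 : Matrix (Fin N) (Fin N) ℝ) - H * C) * F₂).mulVec (f₂ t)
        + (((1 : Matrix (Fin N) (Fin N) ℝ) - H * C) * Nw).mulVec (ω t)
  have hlip : ∀ t : ℝ, LipschitzOnWith ‖A‖₊ (fun x => A x + g t) Set.univ := by
    intro t
    refine LipschitzWith.lipschitzOnWith (LipschitzWith.of_dist_le_mul fun x y => ?_)
    rw [dist_add_right]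
    exact A.lipschitz.dist_le_mul x y
  have h1 : ∀ t, HasDerivAt e (A (e t) + g t) t ∧ e t ∈ (Set.univ : Set (Fin N → ℝ)) := by
    intro t
    refine ⟨?_, Set.mem_univ _⟩
    have h := (hsol t).1
    rw [hz, hF₁, hL] at h
    simpa [A, g, add_assoc] using h
  have h2 : ∀ t, HasDerivAt e' (A (e' t) + g t) t ∧ e' t ∈ (Set.univ : Set (Fin N → ℝ)) := by
    intro t
    refine ⟨?_, Set.mem_univ _⟩
    have h := (hsol' t).1
    rw [hz, hF₁, hL] at h
    simpa [A, g, add_assoc] using h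
  exact congrFun (ODE_solution_unique_univ (v := fun t x => A x + g t)
    (s := fun _ => Set.univ) hlip h1 h2 h0) t
end

section
/- Let V be a finite-dimensional real vector space of dimension d, let F : V → V and L : V → W be linear maps (W a real vector space), and let B be a subspace of V. Define 𝒱₀ = ker L, 𝒱_{k+1} = ker L ∩ F⁻¹(𝒱_k + B), and 𝒲₀ = B, 𝒲_{k+1} = B + F(𝒲_k ∩ ker L). If ker L ∩ B = {0}, then 𝒱_d ∩ 𝒲_d = {0}. -/
/-- Concluding step in the proof of Proposition 1: for the two subspace
recursions `𝒱₀ = ker L`, `𝒱_{k+1} = ker L ∩ F⁻¹(𝒱_k + B)` and `𝒲₀ = B`,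
`𝒲_{k+1} = B + F(𝒲_k ∩ ker L)`, if `ker L ∩ B = {0}` then `𝒱_d ∩ 𝒲_d = {0}`
(so the largest controllability subspace R* = 𝒱 ∩ 𝒲* contained in ker L is
null). -/
theorem controllability_subspace_null
    {V W : Type*} [AddCommGroup V] [Module ℝ V] [FiniteDimensional ℝ V]
    [AddCommGroup W] [Module ℝ W]
    (d : ℕ) (hd : Module.finrank ℝ V = d)
    (F : V →ₗ[ℝ] V) (L : V →ₗ[ℝ] W) (B : Submodule ℝ V)
    (𝒱 𝒲 : ℕ → Submodule ℝ V)
    (hV0 : 𝒱 0 = LinearMap.ker L)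
    (hVsucc : ∀ k, 𝒱 (k + 1) = LinearMap.ker L ⊓ Submodule.comap F (𝒱 k ⊔ B))
    (hW0 : 𝒲 0 = B)
    (hWsucc : ∀ k, 𝒲 (k + 1) = B ⊔ Submodule.map F (𝒲 k ⊓ LinearMap.ker L))
    (hker : LinearMap.ker L ⊓ B = ⊥) :
    𝒱 d ⊓ 𝒲 d = ⊥ := by
  have hW : ∀ k, 𝒲 k = B := by
    intro k
    induction k with
    | zero => exact hW0
    | succ k ih => rw [hWsucc, ih, inf_comm, hker, Submodule.map_bot, sup_bot_eq]
  have hV : 𝒱 d ≤ LinearMap.ker L := by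
    cases d with
    | zero => exact hV0.le
    | succ k => rw [hVsucc]; exact inf_le_left
  rw [hW, eq_bot_iff, ← hker]
  exact inf_le_inf_right B hV
end

section
/- Let N, p, m, m_a, p_a be natural numbers and let A : N×N, B : N×m, B_a : N×m_a, C : p×N be real matrices. Let u : ℝ→ℝ^m and a_u : ℝ→ℝ^{m_a} be continuous. Suppose x, x_nom, x_cov : ℝ→ℝ^N are differentiable with, for all t ∈ ℝ, x'(t) = A·x(t) + B·u(t) + B_a·a_u(t), x_nom'(t) = A·x_nom(t) + B·u(t), x_cov'(t) = A·x_cov(t) + B_a·a_u(t), and x(0) = x_nom(0), x_cov(0) = 0. Then for all t ≥ 0: x(t) = x_nom(t) + x_cov(t); consequently, if the sensor attack satisfies D_a·a_y(t) = −C·x_cov(t) for a matrix D_a : p×p_a and function a_y : ℝ→ℝ^{p_a}, then the attacked output y*(t) = C·x(t) + D_a·a_y(t) equals the nominal output C·x_nom(t) for all t ≥ 0. -/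
open Matrix

/-- Covert attack construction (Scenario 2 / Definition 2 of the paper): by
superposition and uniqueness for linear ODEs, the attacked state decomposes as
`x = x_nom + x_cov` for t ≥ 0, and hence a sensor attack satisfying
`D_a a_y = -C x_cov` makes the attacked output `y* = C x + D_a a_y` identical
to the nominal (attack-free) output `C x_nom` for all t ≥ 0. -/
theorem covert_attack_undetectable {N p m m_a p_a : ℕ}
    (A : Matrix (Fin N) (Fin N) ℝ) (B : Matrix (Fin N) (Fin m) ℝ)
    (B_a : Matrix (Fin N) (Fin m_a) ℝ) (C : Matrix (Fin p) (Fin N) ℝ)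
    (D_a : Matrix (Fin p) (Fin p_a) ℝ)
    (u : ℝ → Fin m → ℝ) (a_u : ℝ → Fin m_a → ℝ)
    (hu : Continuous u) (hau : Continuous a_u)
    (x x_nom x_cov : ℝ → Fin N → ℝ)
    (hx : ∀ t : ℝ, HasDerivAt x
      (A.mulVec (x t) + B.mulVec (u t) + B_a.mulVec (a_u t)) t)
    (hxnom : ∀ t : ℝ, HasDerivAt x_nom
      (A.mulVec (x_nom t) + B.mulVec (u t)) t)
    (hxcov : ∀ t : ℝ, HasDerivAt x_cov
      (A.mulVec (x_cov t) + B_a.mulVec (a_u t)) t)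
    (h0 : x 0 = x_nom 0) (h0c : x_cov 0 = 0) :
    (∀ t : ℝ, 0 ≤ t → x t = x_nom t + x_cov t) ∧
    ∀ a_y : ℝ → Fin p_a → ℝ,
      (∀ t : ℝ, D_a.mulVec (a_y t) = -(C.mulVec (x_cov t))) →
      ∀ t : ℝ, 0 ≤ t →
        C.mulVec (x t) + D_a.mulVec (a_y t) = C.mulVec (x_nom t) := by
  have key : ∀ t : ℝ, x t = x_nom t + x_cov t := by
    let L : (Fin N → ℝ) →L[ℝ] (Fin N → ℝ) := LinearMap.toContinuousLinearMap (Matrix.mulVecLin A)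
    have hL : ∀ v, L v = A.mulVec v := fun v => rfl
    have hd : ∀ t : ℝ, HasDerivAt (fun s => x s - (x_nom s + x_cov s))
        (L (x t - (x_nom t + x_cov t))) t := by
      intro t
      have h := (hx t).sub ((hxnom t).add (hxcov t))
      have e : L (x t - (x_nom t + x_cov t)) =
          (A.mulVec (x t) + B.mulVec (u t) + B_a.mulVec (a_u t)) -
          ((A.mulVec (x_nom t) + B.mulVec (u t)) +
            (A.mulVec (x_cov t) + B_a.mulVec (a_u t))) := by
        rw [hL, Matrix.mulVec_sub, Matrix.mulVec_add]
        abel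
      rw [e]
      exact h
    have hz : ∀ t : ℝ, HasDerivAt (fun _ : ℝ => (0 : Fin N → ℝ)) (L 0) t := by
      intro t
      rw [map_zero]
      exact hasDerivAt_const t _
    have h := ODE_solution_unique_univ (v := fun _ => L) (s := fun _ => Set.univ)
      (K := ‖L‖₊) (t₀ := 0) (fun _ => L.lipschitz.lipschitzOnWith)
      (fun t => ⟨hd t, Set.mem_univ _⟩) (fun t => ⟨hz t, Set.mem_univ _⟩)
      (by simp [h0, h0c])
    intro t
    exact sub_eq_zero.mp (congrFun h t)
  refine ⟨fun t _ => key t, fun a_y hay t _ => ?_⟩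
  rw [hay t, key t, Matrix.mulVec_add]
  abel
end
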